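/- Let K ⊆ ℝ^n be a nonempty compact set, μ a finite Borel measure whose support is exactly K, f a real polynomial, and f* := min_{x∈K} f(x). For each d ∈ ℕ the set S_d := {a ∈ ℝ : M_d(f μ) − a·M_d(μ) is positive semidefinite} is nonempty and bounded above; its supremum a_d satisfies a_d ≥ f*; the sequence (a_d)_{d∈ℕ} is nonincreasing; and a_d → f* as d → ∞. -/

import Mathlib

/-!
For a coefficient vector `c` with associated polynomial `p = ∑ c_α x^α`, the quadratic form of
`M_d(f μ) - a M_d(μ)` at `c` is `∫ (f - a) p² dμ` (`locMat_quadForm`). So `a ∈ S_d` says exactly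
that this integral is nonnegative for every `p` of coordinate degree at most `d`. Then `f* ∈ S_d`
because `f ≥ f*` almost everywhere, the choice `p = 1` bounds `S_d` above, and `S_e ⊆ S_d` for
`d ≤ e` because `M_d` is a principal submatrix of `M_e`.

For the limit, let `b > f*` and `g = max (0, b - f)`. Then `(f - b) g² = -g³`, whose integral is
strictly negative since `{f < b}` is open, meets `K`, and hence has positive measure. As `g` is a
continuous function of `f`, the one-variable Weierstrass theorem approximates it uniformly on `K`
by `p = P(f)` with `P` a polynomial, and `∫ (f - b) p² dμ < 0` for a close enough approximation
(`exists_integral_neg`). Once `d` exceeds the degree of `p`, no `a ≥ b` can lie in `S_d`.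
-/

open MeasureTheory MvPolynomial

/-- The degree-`d` localizing matrix of a polynomial `h` with respect to a measure `μ` on
`ℝ^n`: rows and columns are indexed by multi-indices `α` with `αᵢ ≤ d` for all `i` (encoded
as `α : Fin n → Fin (d+1)`), and the `(α, β)` entry is `∫ h(x) x^{α+β} dμ(x)`.
For `h = 1` this is the moment matrix `M_d(μ)`. -/
noncomputable def locMat (n d : ℕ) (μ : Measure (Fin n → ℝ)) (h : MvPolynomial (Fin n) ℝ) :
    Matrix (Fin n → Fin (d + 1)) (Fin n → Fin (d + 1)) ℝ :=
  Matrix.of fun α β => ∫ x, eval x h * ∏ i, x i ^ ((α i : ℕ) + (β i : ℕ)) ∂μ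

section Aux

/-- The polynomial with coordinate degrees at most `d` and coefficient vector `c`, as a function. -/
noncomputable def boxPoly {n d : ℕ} (c : (Fin n → Fin (d + 1)) → ℝ) (x : Fin n → ℝ) : ℝ :=
  ∑ α, c α * ∏ i, x i ^ (α i : ℕ)

lemma continuous_boxPoly {n d : ℕ} (c : (Fin n → Fin (d + 1)) → ℝ) :
    Continuous (boxPoly c) := by
  unfold boxPoly
  fun_prop

lemma exists_boxPoly_eq {n : ℕ} (p : MvPolynomial (Fin n) ℝ) :
    ∃ (d : ℕ) (c : (Fin n → Fin (d + 1)) → ℝ), ∀ x, eval x p = boxPoly c x := by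
  classical
  have hdeg : ∀ m ∈ p.support, ∀ i, m i < p.totalDegree + 1 := fun m hm i =>
    Nat.lt_succ_of_le ((monomial_le_degreeOf i hm).trans (degreeOf_le_totalDegree p i))
  refine ⟨p.totalDegree,
    fun α => p.coeff (Finsupp.equivFunOnFinite.symm fun i => (α i : ℕ)), fun x => ?_⟩
  rw [eval_eq', boxPoly]
  have hval : ∀ m ∈ p.support, ∀ i, (Fin.ofNat (p.totalDegree + 1) (m i) : ℕ) = m i :=
    fun m hm i => Nat.mod_eq_of_lt (hdeg m hm i)
  refine Finset.sum_of_injOn (fun m i => Fin.ofNat (p.totalDegree + 1) (m i)) ?_ ?_ ?_ ?_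
  · intro m hm m' hm' h
    ext i
    rw [← hval m hm i, ← hval m' hm' i]
    exact congrArg Fin.val (congrFun h i)
  · intro m _
    simp
  · intro α _ hα
    have : p.coeff (Finsupp.equivFunOnFinite.symm fun i => (α i : ℕ)) = 0 := by
      by_contra hne
      refine hα ⟨_, mem_support_iff.mpr hne, ?_⟩
      funext i
      apply Fin.ext
      simp
    rw [this, zero_mul]
  · intro m hm
    have hm' : (Finsupp.equivFunOnFinite.symm fun i =>
        ((Fin.ofNat (p.totalDegree + 1) (m i) : Fin _) : ℕ)) = m := by
      ext i
      simpa using hval m hm i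
    simp only [hval m hm] at hm' ⊢
    rw [hm']

variable {n : ℕ} {K : Set (Fin n → ℝ)} {μ : Measure (Fin n → ℝ)} [IsFiniteMeasure μ]

lemma integrable_of_continuous (hK : IsCompact K) (hsupp : μ Kᶜ = 0)
    {g : (Fin n → ℝ) → ℝ} (hg : Continuous g) : Integrable g μ := by
  have h := hg.continuousOn.integrableOn_compact (μ := μ) hK
  rwa [IntegrableOn, Measure.restrict_eq_self_of_ae_mem (mem_ae_iff.mpr hsupp)] at h

lemma locMat_quadForm (hK : IsCompact K) (hsupp : μ Kᶜ = 0) (f : MvPolynomial (Fin n) ℝ)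
    (a : ℝ) {d : ℕ} (c : (Fin n → Fin (d + 1)) → ℝ) :
    star c ⬝ᵥ (locMat n d μ f - a • locMat n d μ 1).mulVec c =
      ∫ x, (eval x f - a) * boxPoly c x ^ 2 ∂μ := by
  have hf : Continuous fun x => eval x f := continuous_eval f
  have hentry : ∀ α β : Fin n → Fin (d + 1), (locMat n d μ f - a • locMat n d μ 1) α β =
      ∫ x, (eval x f - a) * ∏ i, x i ^ ((α i : ℕ) + (β i : ℕ)) ∂μ := by
    intro α β
    simp only [locMat, Matrix.sub_apply, Matrix.smul_apply, Matrix.of_apply, smul_eq_mul]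
    rw [← integral_const_mul, ← integral_sub]
    · congr 1
      funext x
      simp only [map_one]
      ring
    · exact integrable_of_continuous hK hsupp (by fun_prop)
    · exact integrable_of_continuous hK hsupp (by simp only [map_one]; fun_prop)
  have hexp : ∀ x, (eval x f - a) * boxPoly c x ^ 2 = ∑ α, ∑ β,
      c α * (((eval x f - a) * ∏ i, x i ^ ((α i : ℕ) + (β i : ℕ))) * c β) := by
    intro x
    rw [boxPoly, sq, Finset.sum_mul_sum, Finset.mul_sum]
    refine Finset.sum_congr rfl fun α _ => ?_
    rw [Finset.mul_sum]
    refine Finset.sum_congr rfl fun β _ => ?_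
    simp only [pow_add, Finset.prod_mul_distrib]
    ring
  simp only [hexp]
  rw [integral_finsetSum _ fun α _ => integrable_of_continuous hK hsupp (by fun_prop)]
  simp only [dotProduct, Matrix.mulVec, star_trivial, hentry]
  refine Finset.sum_congr rfl fun α _ => ?_
  rw [integral_finsetSum _ fun β _ => integrable_of_continuous hK hsupp (by fun_prop),
    Finset.mul_sum]
  refine Finset.sum_congr rfl fun β _ => ?_
  rw [integral_const_mul, integral_mul_const]

lemma posSemidef_iff (hK : IsCompact K) (hsupp : μ Kᶜ = 0) (f : MvPolynomial (Fin n) ℝ)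
    (a : ℝ) (d : ℕ) :
    (locMat n d μ f - a • locMat n d μ 1).PosSemidef ↔
      ∀ c : (Fin n → Fin (d + 1)) → ℝ, 0 ≤ ∫ x, (eval x f - a) * boxPoly c x ^ 2 ∂μ := by
  rw [Matrix.posSemidef_iff_dotProduct_mulVec]
  simp only [locMat_quadForm hK hsupp]
  refine and_iff_right ?_
  ext α β
  simp [locMat, add_comm]

/-- If `f` takes a value below `b` on the support of `μ`, then `(f - b) p²` has negative integral
for some polynomial `p`. -/
lemma exists_integral_neg (hK : IsCompact K) (hsupp : μ Kᶜ = 0)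
    (hpos : ∀ U : Set (Fin n → ℝ), IsOpen U → (U ∩ K).Nonempty → 0 < μ U)
    (f : MvPolynomial (Fin n) ℝ) {b : ℝ} {x₀ : Fin n → ℝ} (hx₀ : x₀ ∈ K) (hb : eval x₀ f < b) :
    ∃ p : MvPolynomial (Fin n) ℝ, ∫ x, (eval x f - b) * eval x p ^ 2 ∂μ < 0 := by
  have hf : Continuous fun x => eval x f := continuous_eval f
  set g : (Fin n → ℝ) → ℝ := fun x => max 0 (b - eval x f) with hg
  have hgc : Continuous g := by fun_prop
  have hg0 : ∀ x, 0 ≤ g x := fun x => le_max_left _ _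
  have hδ : 0 < ∫ x, g x ^ 3 ∂μ := by
    rw [integral_pos_iff_support_of_nonneg (fun x => pow_nonneg (hg0 x) 3)
      (integrable_of_continuous hK hsupp (by fun_prop))]
    refine (hpos {x | eval x f < b} (isOpen_lt hf continuous_const) ⟨x₀, hb, hx₀⟩).trans_le
      (measure_mono fun x hx => ?_)
    have : 0 < g x := lt_max_of_lt_right (sub_pos.mpr hx)
    exact (pow_pos this 3).ne'
  set δ := ∫ x, g x ^ 3 ∂μ
  obtain ⟨C, hC⟩ := hK.exists_bound_of_continuousOn (f := fun x => eval x f - b)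
    (by fun_prop : Continuous fun x => eval x f - b).continuousOn
  simp only [Real.norm_eq_abs] at hC
  have hC0 : 0 ≤ C := (abs_nonneg _).trans (hC x₀ hx₀)
  set D := C * (2 * C + 1) * μ.real Set.univ with hD
  have hD0 : 0 ≤ D := by positivity
  set ε := min 1 (δ / (D + 1)) with hε
  have hε0 : 0 < ε := lt_min one_pos (by positivity)
  have hε1 : ε ≤ 1 := min_le_left _ _
  have hεD : ε * D < δ := by
    have h1 : ε * (D + 1) ≤ δ := (le_div_iff₀ (by positivity)).mp (min_le_right _ _)
    linarith
  obtain ⟨P, hP⟩ := exists_polynomial_near_of_continuousOn (b - C) (b + C)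
    (fun t => max 0 (b - t)) (by fun_prop) ε hε0
  refine ⟨Polynomial.aeval f P, ?_⟩
  have hev : ∀ x, eval x (Polynomial.aeval f P) = P.eval (eval x f) := by
    intro x
    have := Polynomial.hom_eval₂ P (algebraMap ℝ (MvPolynomial (Fin n) ℝ)) (eval x) f
    rw [Polynomial.aeval_def, this, ← Polynomial.eval₂_id]
    congr 1
    ext r
    simp [MvPolynomial.algebraMap_eq]
  have hpt : ∀ x ∈ K, (eval x f - b) * eval x (Polynomial.aeval f P) ^ 2 ≤
      -g x ^ 3 + ε * (C * (2 * C + 1)) := by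
    intro x hx
    have h1 := hC x hx
    have h2 := abs_le.mp h1
    have hq := (hP (eval x f) ⟨by linarith, by linarith⟩).le
    rw [← hev] at hq
    set q := eval x (Polynomial.aeval f P)
    change |q - g x| ≤ ε at hq
    have hgC : g x ≤ C := max_le hC0 (by linarith)
    have hgg : (eval x f - b) * g x ^ 2 = -g x ^ 3 := by
      rcases le_total (b - eval x f) 0 with h | h
      · have : g x = 0 := max_eq_left h
        simp [this]
      · have : g x = b - eval x f := max_eq_right h
        rw [this]
        ring
    have hsum : |q + g x| ≤ 2 * C + 1 := by
      have := abs_le.mp hq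
      have := hg0 x
      rw [abs_le]
      constructor <;> linarith
    have herr : (eval x f - b) * ((q - g x) * (q + g x)) ≤ C * (ε * (2 * C + 1)) := by
      refine (le_abs_self _).trans ?_
      rw [abs_mul, abs_mul]
      gcongr
    linarith [show (eval x f - b) * q ^ 2 =
      (eval x f - b) * g x ^ 2 + (eval x f - b) * ((q - g x) * (q + g x)) by ring]
  have hp : Continuous fun x => eval x (Polynomial.aeval f P) := continuous_eval _
  have hi3 : Integrable (fun x => -g x ^ 3) μ :=
    integrable_of_continuous hK hsupp (by fun_prop)
  calc ∫ x, (eval x f - b) * eval x (Polynomial.aeval f P) ^ 2 ∂μ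
      ≤ ∫ x, (-g x ^ 3 + ε * (C * (2 * C + 1))) ∂μ := by
        refine integral_mono_ae (integrable_of_continuous hK hsupp (by fun_prop))
          (integrable_of_continuous hK hsupp (by fun_prop)) ?_
        filter_upwards [mem_ae_iff.mpr hsupp] with x hx using hpt x hx
    _ = -δ + ε * D := by
        rw [integral_add hi3 (integrable_const _), integral_neg, integral_const, smul_eq_mul, hD]
        ring
    _ < 0 := by linarith

end Aux

/-- Let `K ⊆ ℝ^n` be nonempty compact, `μ` a finite Borel measure with
support exactly `K`, `f` a polynomial and `f* := min_K f`. For each `d` the set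
`S_d = {a : M_d(f μ) − a M_d(μ) ⪰ 0}` is nonempty and bounded above, its supremum `a_d`
satisfies `a_d ≥ f*`, the sequence `(a_d)` is nonincreasing, and `a_d → f*`. -/
theorem stmt_4 (n : ℕ) (K : Set (Fin n → ℝ)) (hK : IsCompact K) (hKne : K.Nonempty)
    (μ : Measure (Fin n → ℝ)) [IsFiniteMeasure μ]
    (hsupp : μ Kᶜ = 0)
    (hpos : ∀ U : Set (Fin n → ℝ), IsOpen U → (U ∩ K).Nonempty → 0 < μ U)
    (f : MvPolynomial (Fin n) ℝ)
    (fstar : ℝ) (hfstar : IsLeast ((fun x => eval x f) '' K) fstar)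
    (S : ℕ → Set ℝ)
    (hS : S = fun d => {a : ℝ | (locMat n d μ f - a • locMat n d μ 1).PosSemidef}) :
    (∀ d, (S d).Nonempty ∧ BddAbove (S d)) ∧
    (∀ d, fstar ≤ sSup (S d)) ∧
    (Antitone fun d => sSup (S d)) ∧
    Filter.Tendsto (fun d => sSup (S d)) Filter.atTop (nhds fstar) := by
  obtain ⟨⟨x₀, hx₀, hfx₀⟩, hlb⟩ := hfstar
  have hf : Continuous fun x => eval x f := continuous_eval f
  have hmem : ∀ d a, a ∈ S d ↔ ∀ c : (Fin n → Fin (d + 1)) → ℝ,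
      0 ≤ ∫ x, (eval x f - a) * boxPoly c x ^ 2 ∂μ := by
    intro d a
    rw [hS]
    exact posSemidef_iff hK hsupp f a d
  have hstar : ∀ d, fstar ∈ S d := by
    intro d
    rw [hmem]
    intro c
    refine integral_nonneg_of_ae ?_
    filter_upwards [mem_ae_iff.mpr hsupp] with x hx
    exact mul_nonneg (sub_nonneg.mpr (hlb ⟨x, hx, rfl⟩)) (sq_nonneg _)
  have hμ : 0 < μ.real Set.univ :=
    ENNReal.toReal_pos (hpos Set.univ isOpen_univ (by simpa using hKne)).ne' (measure_ne_top _ _)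
  have hanti : ∀ d e, d ≤ e → S e ⊆ S d := by
    intro d e hde a ha
    rw [hS] at ha ⊢
    exact Matrix.PosSemidef.submatrix ha
      (fun (α : Fin n → Fin (d + 1)) i => Fin.castLE (Nat.succ_le_succ hde) (α i))
  have hbdd : ∀ d, BddAbove (S d) := by
    intro d
    refine ⟨(∫ x, eval x f ∂μ) / μ.real Set.univ, fun a ha => ?_⟩
    have h := (hmem 0 a).mp (hanti 0 d d.zero_le ha) fun _ => 1
    -- in degree `0` the only polynomials are constants
    have h1 : ∀ x : Fin n → ℝ, boxPoly (d := 0) (fun _ => 1) x = 1 := by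
      intro x
      simp [boxPoly]
    simp only [h1, one_pow, mul_one] at h
    rw [integral_sub (integrable_of_continuous hK hsupp hf) (integrable_const _), integral_const,
      smul_eq_mul] at h
    rw [le_div_iff₀ hμ]
    linarith
  have hge : ∀ d, fstar ≤ sSup (S d) := fun d => le_csSup (hbdd d) (hstar d)
  refine ⟨fun d => ⟨⟨_, hstar d⟩, hbdd d⟩, hge,
    fun d e hde => csSup_le_csSup (hbdd d) ⟨_, hstar e⟩ (hanti d e hde), ?_⟩
  rw [tendsto_order]
  refine ⟨fun a ha => Filter.Eventually.of_forall fun d => ha.trans_le (hge d), fun b' hb' => ?_⟩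
  obtain ⟨b, hb, hbb'⟩ := exists_between hb'
  obtain ⟨p, hp⟩ := exists_integral_neg hK hsupp hpos f hx₀ (hfx₀.trans_lt hb)
  obtain ⟨d, c, hc⟩ := exists_boxPoly_eq p
  simp only [hc] at hp
  have hcc := continuous_boxPoly c
  filter_upwards [Filter.eventually_ge_atTop d] with e he
  refine (csSup_le ⟨_, hstar e⟩ fun a ha => ?_).trans_lt hbb'
  by_contra! hab
  have h := (hmem d a).mp (hanti d e he ha) c
  have hle : ∫ x, (eval x f - a) * boxPoly c x ^ 2 ∂μ ≤
      ∫ x, (eval x f - b) * boxPoly c x ^ 2 ∂μ := by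
    refine integral_mono (integrable_of_continuous hK hsupp (by fun_prop))
      (integrable_of_continuous hK hsupp (by fun_prop)) fun x => ?_
    dsimp only
    gcongr
  linarith
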